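/- arXiv:2007.02607 — 2 statements merged into one kernel-verified Lean document; each statement's English description precedes it below -/
import Mathlib

section
/- Let u : ℝ³ → ℝ³ be a smooth vector field with div u = 0 on ℝ³, satisfying the Navier-slip boundary condition (u₃ = ∂₃u₁ = ∂₃u₂ = 0 at every point of ∂Ω) and such that (Δ curl u)₁ = (Δ curl u)₂ = 0 at every point of ∂Ω. Then ∂₃∂₃∂₃u₁ = 0 and ∂₃∂₃∂₃u₂ = 0 at every point of ∂Ω. -/
noncomputable section

open MeasureTheory

/-- Points/vectors in ℝ³, indexed by `Fin 3` (so index `0,1,2` stand for coordinates `1,2,3`). -/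
abbrev V3 : Type := Fin 3 → ℝ

/-- Partial derivative in the `i`-th coordinate direction. -/
def pd (i : Fin 3) (f : V3 → ℝ) (x : V3) : ℝ := fderiv ℝ f x (Pi.single i 1)

/-- Divergence of a vector field. -/
def vdiv (u : V3 → V3) (x : V3) : ℝ :=
  pd 0 (fun y => u y 0) x + pd 1 (fun y => u y 1) x + pd 2 (fun y => u y 2) x

/-- Curl of a vector field. -/
def vcurl (u : V3 → V3) (x : V3) : V3 :=
  ![pd 1 (fun y => u y 2) x - pd 2 (fun y => u y 1) x,
    pd 2 (fun y => u y 0) x - pd 0 (fun y => u y 2) x,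
    pd 0 (fun y => u y 1) x - pd 1 (fun y => u y 0) x]

/-- Laplacian of a scalar function. -/
def lap (f : V3 → ℝ) (x : V3) : ℝ :=
  pd 0 (pd 0 f) x + pd 1 (pd 1 f) x + pd 2 (pd 2 f) x

/-- Componentwise Laplacian of a vector field. -/
def vlap (u : V3 → V3) (x : V3) : V3 := fun i => lap (fun y => u y i) x

/-- Advective derivative `(u·∇)V`. -/
def adv (u V : V3 → V3) (x : V3) : V3 := fun i =>
  u x 0 * pd 0 (fun y => V y i) x + u x 1 * pd 1 (fun y => V y i) x +
    u x 2 * pd 2 (fun y => V y i) x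

/-- Cross product in ℝ³. -/
def cross (a b : V3) : V3 :=
  ![a 1 * b 2 - a 2 * b 1, a 2 * b 0 - a 0 * b 2, a 0 * b 1 - a 1 * b 0]

/-- Dot product in ℝ³. -/
def dot (a b : V3) : ℝ := a 0 * b 0 + a 1 * b 1 + a 2 * b 2

/-- Gradient of a scalar function. -/
def grad (f : V3 → ℝ) (x : V3) : V3 := fun i => pd i f x

/-- The boundary `∂Ω = {x : x₃ = 0 or x₃ = 1}`. -/
def onBdry (x : V3) : Prop := x 2 = 0 ∨ x 2 = 1

/-- Horizontal periodicity (period 1 in x₁ and x₂) of a scalar function. -/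
def hperS (f : V3 → ℝ) : Prop :=
  (∀ x, f (x + Pi.single 0 1) = f x) ∧ (∀ x, f (x + Pi.single 1 1) = f x)

/-- Horizontal periodicity (period 1 in x₁ and x₂) of a vector field. -/
def hperV (u : V3 → V3) : Prop :=
  (∀ x, u (x + Pi.single 0 1) = u x) ∧ (∀ x, u (x + Pi.single 1 1) = u x)

/-- The unit cube `Q = [0,1]³`. -/
def Q3 : Set V3 := Set.Icc 0 1

lemma pd_smooth (i : Fin 3) {f : V3 → ℝ} (hf : ContDiff ℝ (⊤ : ℕ∞) f) :
    ContDiff ℝ (⊤ : ℕ∞) (pd i f) := by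
  unfold pd
  exact (hf.fderiv_right (m := (⊤ : ℕ∞)) (by simp)).clm_apply contDiff_const

lemma smooth_diff {f : V3 → ℝ} (hf : ContDiff ℝ (⊤ : ℕ∞) f) : Differentiable ℝ f :=
  hf.differentiable (by simp)

lemma pd_sub_fun (i : Fin 3) {f g : V3 → ℝ} (hf : ContDiff ℝ (⊤ : ℕ∞) f)
    (hg : ContDiff ℝ (⊤ : ℕ∞) g) :
    pd i (fun y => f y - g y) = fun y => pd i f y - pd i g y := by
  funext x
  unfold pd
  rw [fderiv_fun_sub (smooth_diff hf x) (smooth_diff hg x)]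
  rfl

lemma pd_add_fun (i : Fin 3) {f g : V3 → ℝ} (hf : ContDiff ℝ (⊤ : ℕ∞) f)
    (hg : ContDiff ℝ (⊤ : ℕ∞) g) :
    pd i (fun y => f y + g y) = fun y => pd i f y + pd i g y := by
  funext x
  unfold pd
  rw [fderiv_fun_add (smooth_diff hf x) (smooth_diff hg x)]
  rfl

lemma pd_pd_apply (i j : Fin 3) {f : V3 → ℝ} (hf : ContDiff ℝ (⊤ : ℕ∞) f) (x : V3) :
    pd i (pd j f) x = fderiv ℝ (fderiv ℝ f) x (Pi.single i 1) (Pi.single j 1) := by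
  have h : DifferentiableAt ℝ (fderiv ℝ f) x :=
    ((hf.fderiv_right (m := (⊤ : ℕ∞)) (by simp)).differentiable (by simp)) x
  have := (h.hasFDerivAt.clm_apply (hasFDerivAt_const (Pi.single j (1 : ℝ) : V3) x)).fderiv
  change fderiv ℝ (fun y => fderiv ℝ f y (Pi.single j 1)) x (Pi.single i 1) = _
  rw [this]
  simp

lemma pd_comm (i j : Fin 3) {f : V3 → ℝ} (hf : ContDiff ℝ (⊤ : ℕ∞) f) :
    pd i (pd j f) = pd j (pd i f) := by
  funext x
  rw [pd_pd_apply i j hf, pd_pd_apply j i hf]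
  have h : IsSymmSndFDerivAt ℝ f x := by
    apply ContDiffAt.isSymmSndFDerivAt (n := (⊤ : ℕ∞)) hf.contDiffAt
    simp only [minSmoothness_of_isRCLikeNormedField]
    exact WithTop.coe_le_coe.2 (le_top : (2 : ℕ∞) ≤ ⊤)
  exact h _ _

/-- Tangential derivatives of a function vanishing on the boundary vanish there. -/
lemma pd_tangential (i : Fin 3) (hi : i ≠ 2) {f : V3 → ℝ} (hf : ContDiff ℝ (⊤ : ℕ∞) f)
    (h0 : ∀ x, onBdry x → f x = 0) : ∀ x, onBdry x → pd i f x = 0 := by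
  intro x hx
  have h1 := (smooth_diff hf x).hasFDerivAt.hasLineDerivAt (Pi.single i (1 : ℝ))
  have h2 : (fun t : ℝ => f (x + t • (Pi.single i (1 : ℝ) : V3))) = fun _ => 0 := by
    funext t
    apply h0
    have : (x + t • (Pi.single i (1 : ℝ) : V3)) 2 = x 2 := by
      simp [Pi.single_apply, hi.symm]
    unfold onBdry
    rw [this]
    exact hx
  unfold HasLineDerivAt at h1
  rw [h2] at h1
  exact h1.unique (hasDerivAt_const _ _)

/-- For divergence-free `u` with the Navier-slip b.c. and `(Δ curl u)₁ = (Δ curl u)₂ = 0`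
on `∂Ω`, it holds that `∂₃∂₃∂₃u₁ = ∂₃∂₃∂₃u₂ = 0` on `∂Ω`. -/
theorem stmt_4 (u : V3 → V3)
    (hu : ContDiff ℝ (⊤ : ℕ∞) u)
    (hdivu : ∀ x, vdiv u x = 0)
    (hubc : ∀ x, onBdry x →
      u x 2 = 0 ∧ pd 2 (fun y => u y 0) x = 0 ∧ pd 2 (fun y => u y 1) x = 0)
    (hlapcurlu : ∀ x, onBdry x →
      vlap (vcurl u) x 0 = 0 ∧ vlap (vcurl u) x 1 = 0) :
    ∀ x, onBdry x →
      pd 2 (pd 2 (pd 2 (fun y => u y 0))) x = 0 ∧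
      pd 2 (pd 2 (pd 2 (fun y => u y 1))) x = 0 := by
  have hc : ∀ i, ContDiff ℝ (⊤ : ℕ∞) (fun y => u y i) := fun i => contDiff_pi.1 hu i
  generalize ha : (fun y => u y 0) = a at *
  generalize hb : (fun y => u y 1) = b at *
  generalize hw : (fun y => u y 2) = w at *
  have sa : ContDiff ℝ (⊤ : ℕ∞) a := ha ▸ hc 0
  have sb : ContDiff ℝ (⊤ : ℕ∞) b := hb ▸ hc 1
  have sw : ContDiff ℝ (⊤ : ℕ∞) w := hw ▸ hc 2
  have w0 : ∀ x, onBdry x → w x = 0 := fun x hx => by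
    rw [← hw]; exact (hubc x hx).1
  have a0 : ∀ x, onBdry x → pd 2 a x = 0 := fun x hx => (hubc x hx).2.1
  have b0 : ∀ x, onBdry x → pd 2 b x = 0 := fun x hx => (hubc x hx).2.2
  have hdiv : ∀ x, pd 0 a x + pd 1 b x + pd 2 w x = 0 := by
    intro x
    have := hdivu x
    unfold vdiv at this
    rwa [ha, hb, hw] at this
  have hww : ∀ x, onBdry x → pd 2 (pd 2 w) x = 0 := by
    intro x hx
    have h : (fun x => pd 0 a x + pd 1 b x + pd 2 w x) = fun _ => 0 := funext hdiv
    have h2 := congrFun (congrArg (pd 2) h) x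
    rw [pd_add_fun 2 ((pd_smooth 0 sa).add (pd_smooth 1 sb)) (pd_smooth 2 sw),
      pd_add_fun 2 (pd_smooth 0 sa) (pd_smooth 1 sb), pd_comm 2 0 sa, pd_comm 2 1 sb] at h2
    have h3 := pd_tangential 0 (by decide) (pd_smooth 2 sa) a0 x hx
    have h4 := pd_tangential 1 (by decide) (pd_smooth 2 sb) b0 x hx
    have h5 : pd 2 (fun _ : V3 => (0 : ℝ)) x = 0 := by simp [pd]
    simp only [h3, h4, h5] at h2
    linarith
  have hwi : ∀ i : Fin 3, i ≠ 2 → ∀ x, onBdry x → pd 2 (pd 2 (pd i w)) x = 0 := by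
    intro i hi x hx
    rw [pd_comm 2 i sw, pd_comm 2 i (pd_smooth 2 sw)]
    exact pd_tangential i hi (pd_smooth 2 (pd_smooth 2 sw)) hww x hx
  have key : ∀ f : V3 → ℝ, ContDiff ℝ (⊤ : ℕ∞) f → (∀ x, onBdry x → f x = 0) →
      ∀ x, onBdry x → lap f x = pd 2 (pd 2 f) x := by
    intro f sf f0 x hx
    unfold lap
    rw [pd_tangential 0 (by decide) (pd_smooth 0 sf)
        (pd_tangential 0 (by decide) sf f0) x hx,
      pd_tangential 1 (by decide) (pd_smooth 1 sf)
        (pd_tangential 1 (by decide) sf f0) x hx]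
    ring
  have c0 : (fun y => vcurl u y 0) = fun y => pd 1 w y - pd 2 b y := by
    rw [← hw, ← hb]; rfl
  have c1 : (fun y => vcurl u y 1) = fun y => pd 2 a y - pd 0 w y := by
    rw [← hw, ← ha]; rfl
  intro x hx
  obtain ⟨l0, l1⟩ := hlapcurlu x hx
  unfold vlap at l0 l1
  rw [c0, key _ ((pd_smooth 1 sw).sub (pd_smooth 2 sb)) (fun x hx => by
      rw [b0 x hx, pd_tangential 1 (by decide) sw w0 x hx, sub_zero]) x hx,
    pd_sub_fun 2 (pd_smooth 1 sw) (pd_smooth 2 sb),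
    pd_sub_fun 2 (pd_smooth 2 (pd_smooth 1 sw)) (pd_smooth 2 (pd_smooth 2 sb))] at l0
  rw [c1, key _ ((pd_smooth 2 sa).sub (pd_smooth 0 sw)) (fun x hx => by
      rw [a0 x hx, pd_tangential 0 (by decide) sw w0 x hx, sub_zero]) x hx,
    pd_sub_fun 2 (pd_smooth 2 sa) (pd_smooth 0 sw),
    pd_sub_fun 2 (pd_smooth 2 (pd_smooth 2 sa)) (pd_smooth 2 (pd_smooth 0 sw))] at l1
  have e1 := hwi 1 (by decide) x hx
  have e0 := hwi 0 (by decide) x hx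
  simp only [e1, e0] at l0 l1
  constructor <;> linarith
end
end

section
/- Let T > 0. Let (u, B, P) and (u⁰, B⁰, P⁰) with u, B, u⁰, B⁰ : ℝ × ℝ³ → ℝ³ and P, P⁰ : ℝ × ℝ³ → ℝ be smooth (jointly in (t,x)) and horizontally periodic in x for each t, both satisfying the ideal incompressible MHD system at every (t,x) ∈ [0,T] × ℝ³: ∂ₜu + (curl u) × u + B × (curl B) + ∇P = 0, div u = 0, ∂ₜB = curl(u × B), div B = 0 (and likewise for (u⁰, B⁰, P⁰)). Assume that for every t ∈ [0,T], u₃(t,·) = 0 and u⁰₃(t,·) = 0 at every point of ∂Ω, and B₁(t,·) = B₂(t,·) = 0 and B⁰₁(t,·) = B⁰₂(t,·) = 0 at every point of ∂Ω. If u(0,x) = u⁰(0,x) and B(0,x) = B⁰(0,x) for every x with 0 ≤ x₃ ≤ 1, then u(t,x) = u⁰(t,x) and B(t,x) = B⁰(t,x) for every t ∈ [0,T] and every x with 0 ≤ x₃ ≤ 1. -/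
noncomputable section

open MeasureTheory

lemma slab_div (F : V3 → V3) (hF : ContDiff ℝ 1 F) (hper : hperV F)
    (hbc : ∀ x, onBdry x → F x 2 = 0) : ∫ x in Q3, vdiv F x = 0 := by
  have hd : ∀ x, DifferentiableAt ℝ F x := fun x => (hF.differentiable one_ne_zero) x
  have key := integral_divergence_of_hasFDerivAt_off_countable (n := 2) (0 : V3) 1
    (by intro i; simp) F (fun x => fderiv ℝ F x) ∅ Set.countable_empty hF.continuous.continuousOn
    (fun x _ => (hd x).hasFDerivAt)
    (by
      apply Continuous.integrableOn_Icc
      have := hF.continuous_fderiv one_ne_zero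
      fun_prop)
  have h1 : ∀ x, vdiv F x = ∑ i, (fderiv ℝ F x) (Pi.single i 1) i := by
    intro x
    simp only [vdiv, pd, Fin.sum_univ_three]
    have : ∀ i j, fderiv ℝ (fun y => F y i) x (Pi.single j 1) = fderiv ℝ F x (Pi.single j 1) i := by
      intro i j
      have := (hasFDerivAt_pi'.1 (hd x).hasFDerivAt i).fderiv
      rw [this]; rfl
    rw [this, this, this]
  have h2 : ∫ x in Q3, vdiv F x = ∫ x in Set.Icc (0 : V3) 1, ∑ i, (fderiv ℝ F x) (Pi.single i 1) i := by
    simp only [h1, Q3]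
  rw [h2, key, Fin.sum_univ_three]
  have e : ∀ (i : Fin 3) (y : Fin 2 → ℝ), (Fin.insertNth i (1:ℝ) y : V3)
      = (Fin.insertNth i (0:ℝ) y : V3) + Pi.single i 1 := by
    intro i y
    ext j
    refine Fin.succAboveCases i ?_ (fun k => ?_) j
    · simp
    · simp
  have b0 : ∀ y : Fin 2 → ℝ, F (Fin.insertNth 2 (0:ℝ) y) 2 = 0 := fun y => hbc _ (Or.inl (by simp [Fin.insertNth_apply_same]))
  have b1 : ∀ y : Fin 2 → ℝ, F (Fin.insertNth 2 (1:ℝ) y) 2 = 0 := fun y => hbc _ (Or.inr (by simp [Fin.insertNth_apply_same]))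
  simp only [Pi.one_apply, Pi.zero_apply, b0, b1]
  simp only [e, hper.1, hper.2]
  simp

lemma pd_joint {w : ℝ → V3 → ℝ} (hw : ContDiff ℝ (⊤ : ℕ∞) (Function.uncurry w)) (i : Fin 3) :
    Continuous (fun p : ℝ × V3 => pd i (w p.1) p.2) := by
  have h : ∀ p : ℝ × V3, pd i (w p.1) p.2 = fderiv ℝ (Function.uncurry w) p (0, Pi.single i 1) := by
    intro p
    have h1 := (hw.differentiable (by simp) p).hasFDerivAt
    have h2 : HasFDerivAt (fun y : V3 => (p.1, y)) (ContinuousLinearMap.inr ℝ ℝ V3) p.2 :=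
      hasFDerivAt_prodMk_right p.1 p.2
    have h3 : HasFDerivAt (w p.1) _ p.2 := HasFDerivAt.comp (g := Function.uncurry w) p.2 h1 h2
    unfold pd
    rw [h3.fderiv]; simp
  simp only [h]
  have := hw.continuous_fderiv (by simp)
  fun_prop

lemma td_joint {w : ℝ → V3 → ℝ} (hw : ContDiff ℝ (⊤ : ℕ∞) (Function.uncurry w)) :
    Continuous (fun p : ℝ × V3 => deriv (fun s => w s p.2) p.1) := by
  have h : ∀ p : ℝ × V3, deriv (fun s => w s p.2) p.1 = fderiv ℝ (Function.uncurry w) p (1, 0) := by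
    intro p
    have h1 := (hw.differentiable (by simp) p).hasFDerivAt
    have h2 : HasDerivAt (fun s : ℝ => (s, p.2)) ((1:ℝ), (0:V3)) p.1 :=
      (hasDerivAt_id p.1).prodMk (hasDerivAt_const _ _)
    have h3 : HasDerivAt (fun s => w s p.2) _ p.1 := HasFDerivAt.comp_hasDerivAt (l := Function.uncurry w) p.1 h1 h2
    rw [h3.deriv]
  simp only [h]
  have := hw.continuous_fderiv (by simp)
  fun_prop

lemma sl_x {w : ℝ → V3 → ℝ} (hw : ContDiff ℝ (⊤ : ℕ∞) (Function.uncurry w)) (t : ℝ) :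
    ContDiff ℝ (⊤ : ℕ∞) (w t) :=
  hw.comp (contDiff_const.prodMk contDiff_id : ContDiff ℝ (⊤ : ℕ∞) (fun y : V3 => (t, y)))

lemma sl_t {w : ℝ → V3 → ℝ} (hw : ContDiff ℝ (⊤ : ℕ∞) (Function.uncurry w)) (x : V3) :
    ContDiff ℝ (⊤ : ℕ∞) (fun s => w s x) :=
  hw.comp (contDiff_id.prodMk contDiff_const : ContDiff ℝ (⊤ : ℕ∞) (fun s : ℝ => (s, x)))

lemma int_deriv {g : ℝ → V3 → ℝ} (hg : ContDiff ℝ (⊤ : ℕ∞) (Function.uncurry g)) (t : ℝ) :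
    HasDerivAt (fun s => ∫ x in Q3, g s x) (∫ x in Q3, deriv (fun s => g s x) t) t := by
  have hc := td_joint hg
  have hQ : IsCompact Q3 := isCompact_Icc
  obtain ⟨C, hC⟩ := ((isCompact_closedBall t 1).prod hQ).exists_bound_of_continuousOn hc.continuousOn
  refine (hasDerivAt_integral_of_dominated_loc_of_deriv_le (μ := volume.restrict Q3) (s := Metric.closedBall t 1)
    (F := g) (F' := fun s x => deriv (fun r => g r x) s) (bound := fun _ => C)
    (Metric.closedBall_mem_nhds t one_pos) ?_ ?_ ?_ ?_ ?_ ?_).2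
  · exact Filter.Eventually.of_forall fun s => (sl_x hg s).continuous.aestronglyMeasurable
  · exact (sl_x hg t).continuous.continuousOn.integrableOn_compact hQ
  · exact (hc.comp (by fun_prop : Continuous (fun x : V3 => (t, x)))).aestronglyMeasurable
  · refine (ae_restrict_iff' measurableSet_Icc).2 (Filter.Eventually.of_forall fun x hx s hs => ?_)
    exact hC (s, x) ⟨hs, hx⟩
  · exact continuous_const.continuousOn.integrableOn_compact hQ
  · exact Filter.Eventually.of_forall fun x s _ => ((sl_t hg x).differentiable (by simp) s).hasDerivAt

lemma zero_of_int {g : V3 → ℝ} (hg : Continuous g) (h0 : ∀ x, 0 ≤ g x) (hi : ∫ x in Q3, g x = 0) :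
    ∀ x ∈ Q3, g x = 0 := by
  have h1 := (setIntegral_eq_zero_iff_of_nonneg_ae (Filter.Eventually.of_forall h0)
    (hg.continuousOn.integrableOn_compact (isCompact_Icc : IsCompact Q3))).1 hi
  refine Measure.eqOn_of_ae_eq h1 hg.continuousOn continuousOn_const ?_
  have hne : (interior Q3).Nonempty := by
    have : Q3 = Set.univ.pi (fun _ : Fin 3 => Set.Icc (0:ℝ) 1) := by
      rw [Set.pi_univ_Icc]; rfl
    rw [this, interior_pi_set Set.finite_univ]
    refine ⟨fun _ => 1/2, fun i _ => ?_⟩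
    rw [interior_Icc]; constructor <;> norm_num
  have := (convex_Icc (𝕜 := ℝ) (0:V3) 1).closure_interior_eq_closure_of_nonempty_interior hne
  exact subset_closure.trans this.ge

lemma per_ext {u u' : V3 → V3} (hu : hperV u) (hu' : hperV u') (h : ∀ x ∈ Q3, u x = u' x) (x : V3)
    (h0 : 0 ≤ x 2) (h1 : x 2 ≤ 1) : u x = u' x := by
  have a0 : Function.Periodic u (Pi.single 0 1) := hu.1
  have a1 : Function.Periodic u (Pi.single 1 1) := hu.2
  have c0 : Function.Periodic u' (Pi.single 0 1) := hu'.1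
  have c1 : Function.Periodic u' (Pi.single 1 1) := hu'.2
  rw [← a0.sub_zsmul_eq ⌊x 0⌋, ← a1.sub_zsmul_eq ⌊x 1⌋, ← c0.sub_zsmul_eq ⌊x 0⌋, ← c1.sub_zsmul_eq ⌊x 1⌋]
  apply h
  constructor
  · intro i; fin_cases i <;> simp [h0]
  · intro i; fin_cases i <;> simp [h1]
    · exact (Int.fract_lt_one _).le
    · exact (Int.fract_lt_one _).le

lemma pd_add {i : Fin 3} {f g : V3 → ℝ} {x : V3} (hf : DifferentiableAt ℝ f x)
    (hg : DifferentiableAt ℝ g x) : pd i (fun y => f y + g y) x = pd i f x + pd i g x := by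
  unfold pd; rw [fderiv_fun_add hf hg]; rfl

lemma pd_sub {i : Fin 3} {f g : V3 → ℝ} {x : V3} (hf : DifferentiableAt ℝ f x)
    (hg : DifferentiableAt ℝ g x) : pd i (fun y => f y - g y) x = pd i f x - pd i g x := by
  unfold pd; rw [fderiv_fun_sub hf hg]; rfl

lemma pd_mul {i : Fin 3} {f g : V3 → ℝ} {x : V3} (hf : DifferentiableAt ℝ f x)
    (hg : DifferentiableAt ℝ g x) :
    pd i (fun y => f y * g y) x = f x * pd i g x + pd i f x * g x := by
  unfold pd; rw [fderiv_fun_mul hf hg]; simp [mul_comm]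

lemma pd_half {i : Fin 3} {f : V3 → ℝ} {x : V3} (hf : DifferentiableAt ℝ f x) :
    pd i (fun y => f y / 2) x = pd i f x / 2 := by
  unfold pd
  have : HasFDerivAt (fun y => f y / 2) ((1/2 : ℝ) • fderiv ℝ f x) x := by
    have := hf.hasFDerivAt.const_mul (1/2 : ℝ)
    have e : (fun y => f y / 2) = fun y => 1 / 2 * f y := by
      funext y; ring
    rw [e]; exact this
  rw [this.fderiv]; simp; ring

/-- Energy flux. -/
def flux (u B u0 B0 : V3 → V3) (P P0 : V3 → ℝ) (x : V3) : V3 := fun i =>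
  (u x i - u0 x i) * dot (u x) (u x - u0 x) - u x i * dot (u x - u0 x) (u x - u0 x) / 2
    - (P x - P0 x) * (u x i - u0 x i)
    + cross (cross (u x - u0 x) (B x)) (B x - B0 x) i
    - u0 x i * dot (B x - B0 x) (B x - B0 x) / 2

/-- Quadratic remainder. -/
def Rem (v b : V3) (a c : Fin 3 → Fin 3 → ℝ) (w : V3) : ℝ :=
  -(∑ i, ∑ j, v i * v j * a i j) - dot (cross b w) v + ∑ i, ∑ j, b i * b j * c i j

set_option maxHeartbeats 4000000 in
lemma ident (u B u0 B0 : V3 → V3) (P P0 : V3 → ℝ) (x : V3)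
    (hu : Differentiable ℝ u) (hB : Differentiable ℝ B) (hP : Differentiable ℝ P)
    (hu0 : Differentiable ℝ u0) (hB0 : Differentiable ℝ B0) (hP0 : Differentiable ℝ P0)
    (ut Bt u0t B0t : V3)
    (hmom : ∀ i : Fin 3, ut i + cross (vcurl u x) (u x) i
        + cross (B x) (vcurl B x) i + grad P x i = 0)
    (hdivu : vdiv u x = 0)
    (hind : ∀ i : Fin 3, Bt i = vcurl (fun y => cross (u y) (B y)) x i)
    (hdivB : vdiv B x = 0)
    (hmom0 : ∀ i : Fin 3, u0t i + cross (vcurl u0 x) (u0 x) i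
        + cross (B0 x) (vcurl B0 x) i + grad P0 x i = 0)
    (hdivu0 : vdiv u0 x = 0)
    (hind0 : ∀ i : Fin 3, B0t i = vcurl (fun y => cross (u0 y) (B0 y)) x i)
    (hdivB0 : vdiv B0 x = 0) :
    dot (u x - u0 x) (ut - u0t) + dot (B x - B0 x) (Bt - B0t)
      = vdiv (flux u B u0 B0 P P0) x
        + Rem (u x - u0 x) (B x - B0 x) (fun i j => pd i (fun y => u y j) x)
          (fun i j => pd i (fun y => u0 y j) x) (vcurl B0 x) := by
  have m0 := hmom 0
  have m1 := hmom 1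
  have m2 := hmom 2
  have n0 := hmom0 0
  have n1 := hmom0 1
  have n2 := hmom0 2
  have i0 := hind 0
  have i1 := hind 1
  have i2 := hind 2
  have j0 := hind0 0
  have j1 := hind0 1
  have j2 := hind0 2
  clear hmom hmom0 hind hind0
  simp (disch := fun_prop) only [Rem, flux, vdiv, vcurl, cross, dot, grad, Fin.sum_univ_three, Pi.sub_apply,
    Matrix.cons_val_zero, Matrix.cons_val_one, Matrix.cons_val, pd_add, pd_sub, pd_mul, pd_half] at *
  generalize pd 0 P x = p0 at *
  generalize pd 1 P x = p1 at *
  generalize pd 2 P x = p2 at *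
  generalize pd 0 P0 x = q0 at *
  generalize pd 1 P0 x = q1 at *
  generalize pd 2 P0 x = q2 at *
  linear_combination (u x 0 - u0 x 0) * (m0 - n0) + (u x 1 - u0 x 1) * (m1 - n1)
    + (u x 2 - u0 x 2) * (m2 - n2) + (B x 0 - B0 x 0) * (i0 - j0) + (B x 1 - B0 x 1) * (i1 - j1)
    + (B x 2 - B0 x 2) * (i2 - j2)
    + (P x - P0 x - (u x 0 * (u x 0 - u0 x 0) + u x 1 * (u x 1 - u0 x 1) + u x 2 * (u x 2 - u0 x 2)))
      * (hdivu - hdivu0)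
    + ((u x 0 - u0 x 0) ^ 2 + (u x 1 - u0 x 1) ^ 2 + (u x 2 - u0 x 2) ^ 2) / 2 * hdivu
    - ((B x 0 - B0 x 0) ^ 2 + (B x 1 - B0 x 1) ^ 2 + (B x 2 - B0 x 2) ^ 2) / 2 * hdivu0
    + (u0 x 0 * (B x 0 - B0 x 0) + u0 x 1 * (B x 1 - B0 x 1) + u0 x 2 * (B x 2 - B0 x 2))
      * (hdivB - hdivB0)


lemma tri_bound {x y a S M : ℝ} (hx : x ^ 2 ≤ S) (hy : y ^ 2 ≤ S) (ha : |a| ≤ M) :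
    |x * y * a| ≤ S * M := by
  rw [abs_mul]
  have h1 : |x * y| ≤ S := by
    rw [abs_le]
    constructor <;> nlinarith [sq_nonneg (x + y), sq_nonneg (x - y)]
  exact mul_le_mul h1 ha (abs_nonneg _) ((abs_nonneg _).trans h1)

lemma rem_bound (v b : V3) (a c : Fin 3 → Fin 3 → ℝ) (w : V3) (M : ℝ)
    (ha : ∀ i j, |a i j| ≤ M) (hc : ∀ i j, |c i j| ≤ M) (hw : ∀ i, |w i| ≤ M) :
    |Rem v b a c w| ≤ 48 * M * ((dot v v + dot b b) / 2) := by
  set S := dot v v + dot b b with hS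
  have hv : ∀ i, v i ^ 2 ≤ S := by
    intro i
    fin_cases i <;> simp [hS, dot] <;>
      linarith [mul_self_nonneg (v 0), mul_self_nonneg (v 1), mul_self_nonneg (v 2), mul_self_nonneg (b 0),
        mul_self_nonneg (b 1), mul_self_nonneg (b 2), sq (v 0), sq (v 1), sq (v 2)]
  have hb : ∀ i, b i ^ 2 ≤ S := by
    intro i
    fin_cases i <;> simp [hS, dot] <;>
      linarith [mul_self_nonneg (v 0), mul_self_nonneg (v 1), mul_self_nonneg (v 2), mul_self_nonneg (b 0),
        mul_self_nonneg (b 1), mul_self_nonneg (b 2), sq (b 0), sq (b 1), sq (b 2)]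
  have A : |∑ i, ∑ j, v i * v j * a i j| ≤ 9 * (S * M) := by
    calc _ ≤ ∑ i, ∑ j, |v i * v j * a i j| :=
          (Finset.abs_sum_le_sum_abs _ _).trans
            (Finset.sum_le_sum fun i _ => Finset.abs_sum_le_sum_abs _ _)
      _ ≤ ∑ i : Fin 3, ∑ j : Fin 3, S * M :=
          Finset.sum_le_sum fun i _ => Finset.sum_le_sum fun j _ => tri_bound (hv i) (hv j) (ha i j)
      _ = _ := by simp; ring
  have C : |∑ i, ∑ j, b i * b j * c i j| ≤ 9 * (S * M) := by
    calc _ ≤ ∑ i, ∑ j, |b i * b j * c i j| :=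
          (Finset.abs_sum_le_sum_abs _ _).trans
            (Finset.sum_le_sum fun i _ => Finset.abs_sum_le_sum_abs _ _)
      _ ≤ ∑ i : Fin 3, ∑ j : Fin 3, S * M :=
          Finset.sum_le_sum fun i _ => Finset.sum_le_sum fun j _ => tri_bound (hb i) (hb j) (hc i j)
      _ = _ := by simp; ring
  have D : |dot (cross b w) v| ≤ 6 * (S * M) := by
    have e : dot (cross b w) v = b 1 * v 0 * w 2 - b 2 * v 0 * w 1 + (b 2 * v 1 * w 0 - b 0 * v 1 * w 2)
      + (b 0 * v 2 * w 1 - b 1 * v 2 * w 0) := by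
      simp [dot, cross]; ring
    have t := fun i j k => abs_le.1 (tri_bound (hb i) (hv j) (hw k))
    rw [e, abs_le]
    constructor <;> linarith [(t 1 0 2).1, (t 1 0 2).2, (t 2 0 1).1, (t 2 0 1).2, (t 2 1 0).1, (t 2 1 0).2,
      (t 0 1 2).1, (t 0 1 2).2, (t 0 2 1).1, (t 0 2 1).2, (t 1 2 0).1, (t 1 2 0).2]
  rw [abs_le] at *
  unfold Rem
  constructor <;> linarith [A.1, A.2, C.1, C.2, D.1, D.2]

lemma pd_cont {w : ℝ → V3 → V3} (hw : ContDiff ℝ (⊤ : ℕ∞) (Function.uncurry w)) (i j : Fin 3) :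
    Continuous (fun p : ℝ × V3 => pd i (fun y => w p.1 y j) p.2) :=
  pd_joint (w := fun t y => w t y j) (contDiff_pi.1 hw j) i

lemma pd_bd {w : ℝ → V3 → V3} (hw : ContDiff ℝ (⊤ : ℕ∞) (Function.uncurry w)) (T : ℝ) :
    ∃ M, ∀ t ∈ Set.Icc (0:ℝ) T, ∀ x ∈ Q3, ∀ i j, |pd i (fun y => w t y j) x| ≤ M := by
  have hK : IsCompact (Set.Icc (0:ℝ) T ×ˢ Q3) := isCompact_Icc.prod isCompact_Icc
  have h := fun i j => hK.exists_bound_of_continuousOn (pd_cont hw i j).continuousOn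
  choose M hM using h
  refine ⟨∑ i, ∑ j, |M i j|, fun t ht x hx i j => ?_⟩
  calc _ ≤ M i j := hM i j (t, x) ⟨ht, hx⟩
    _ ≤ |M i j| := le_abs_self _
    _ ≤ ∑ j, |M i j| := Finset.single_le_sum (f := fun j => |M i j|) (fun _ _ => abs_nonneg _) (Finset.mem_univ j)
    _ ≤ _ := Finset.single_le_sum (f := fun i => ∑ j, |M i j|)
      (fun _ _ => Finset.sum_nonneg fun _ _ => abs_nonneg _) (Finset.mem_univ i)

lemma dot_self_nonneg (v : V3) : 0 ≤ dot v v := by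
  unfold dot; linarith [mul_self_nonneg (v 0), mul_self_nonneg (v 1), mul_self_nonneg (v 2)]

lemma eq_of_dot {v w : V3} (h : dot (v - w) (v - w) = 0) : v = w := by
  simp only [dot, Pi.sub_apply] at h
  have h0 : v 0 - w 0 = 0 := by nlinarith [sq_nonneg (v 0 - w 0), sq_nonneg (v 1 - w 1), sq_nonneg (v 2 - w 2)]
  have h1 : v 1 - w 1 = 0 := by nlinarith [sq_nonneg (v 0 - w 0), sq_nonneg (v 1 - w 1), sq_nonneg (v 2 - w 2)]
  have h2 : v 2 - w 2 = 0 := by nlinarith [sq_nonneg (v 0 - w 0), sq_nonneg (v 1 - w 1), sq_nonneg (v 2 - w 2)]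
  ext i; fin_cases i <;> simp <;> linarith

lemma flux_per {u B u0 B0 : V3 → V3} {P P0 : V3 → ℝ} (h1 : hperV u) (h2 : hperV B) (h3 : hperV u0)
    (h4 : hperV B0) (h5 : hperS P) (h6 : hperS P0) : hperV (flux u B u0 B0 P P0) := by
  constructor
  · intro x; funext i; simp only [flux, h1.1 x, h2.1 x, h3.1 x, h4.1 x, h5.1 x, h6.1 x]
  · intro x; funext i; simp only [flux, h1.2 x, h2.2 x, h3.2 x, h4.2 x, h5.2 x, h6.2 x]

lemma flux_bc {u B u0 B0 : V3 → V3} {P P0 : V3 → ℝ} {x : V3} (h1 : u x 2 = 0) (h2 : u0 x 2 = 0)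
    (h3 : B x 0 = 0 ∧ B x 1 = 0) (h4 : B0 x 0 = 0 ∧ B0 x 1 = 0) : flux u B u0 B0 P P0 x 2 = 0 := by
  simp [flux, cross, h1, h2, h3, h4]

lemma flux_smooth {u B u0 B0 : V3 → V3} {P P0 : V3 → ℝ} (h1 : ContDiff ℝ 1 u) (h2 : ContDiff ℝ 1 B)
    (h3 : ContDiff ℝ 1 u0) (h4 : ContDiff ℝ 1 B0) (h5 : ContDiff ℝ 1 P) (h6 : ContDiff ℝ 1 P0) :
    ContDiff ℝ 1 (flux u B u0 B0 P P0) := by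
  have a1 := contDiff_pi.1 h1
  have a2 := contDiff_pi.1 h2
  have a3 := contDiff_pi.1 h3
  have a4 := contDiff_pi.1 h4
  refine contDiff_pi.2 fun i => ?_
  fin_cases i <;> simp only [flux, cross, dot, Pi.sub_apply, Fin.zero_eta, Fin.mk_one, Fin.reduceFinMk, Matrix.cons_val_zero, Matrix.cons_val_one, Matrix.cons_val] <;> fun_prop

lemma sl_xV {w : ℝ → V3 → V3} (hw : ContDiff ℝ (⊤ : ℕ∞) (Function.uncurry w)) (t : ℝ) :
    ContDiff ℝ 1 (w t) :=
  (hw.comp (contDiff_const.prodMk contDiff_id : ContDiff ℝ (⊤ : ℕ∞) (fun y : V3 => (t, y)))).of_le (by simp)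

/-- Energy density of the difference. -/
def en (u B u0 B0 : ℝ → V3 → V3) (t : ℝ) (x : V3) : ℝ :=
  (dot (u t x - u0 t x) (u t x - u0 t x) + dot (B t x - B0 t x) (B t x - B0 t x)) / 2

lemma en_nonneg (u B u0 B0 : ℝ → V3 → V3) (t : ℝ) (x : V3) : 0 ≤ en u B u0 B0 t x := by
  have := dot_self_nonneg (u t x - u0 t x)
  have := dot_self_nonneg (B t x - B0 t x)
  unfold en; positivity

lemma en_smooth {u B u0 B0 : ℝ → V3 → V3}
    (hu : ContDiff ℝ (⊤ : ℕ∞) (Function.uncurry u))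
    (hB : ContDiff ℝ (⊤ : ℕ∞) (Function.uncurry B))
    (hu0 : ContDiff ℝ (⊤ : ℕ∞) (Function.uncurry u0))
    (hB0 : ContDiff ℝ (⊤ : ℕ∞) (Function.uncurry B0)) :
    ContDiff ℝ (⊤ : ℕ∞) (Function.uncurry (en u B u0 B0)) := by
  have a1 := contDiff_pi.1 hu
  have a2 := contDiff_pi.1 hB
  have a3 := contDiff_pi.1 hu0
  have a4 := contDiff_pi.1 hB0
  have e : Function.uncurry (en u B u0 B0) = fun p =>
    (dot (Function.uncurry u p - Function.uncurry u0 p) (Function.uncurry u p - Function.uncurry u0 p)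
      + dot (Function.uncurry B p - Function.uncurry B0 p) (Function.uncurry B p - Function.uncurry B0 p)) / 2 := rfl
  rw [e]
  simp only [dot, Pi.sub_apply]
  fun_prop

lemma en_deriv {u B u0 B0 : ℝ → V3 → V3}
    (hu : ContDiff ℝ (⊤ : ℕ∞) (Function.uncurry u))
    (hB : ContDiff ℝ (⊤ : ℕ∞) (Function.uncurry B))
    (hu0 : ContDiff ℝ (⊤ : ℕ∞) (Function.uncurry u0))
    (hB0 : ContDiff ℝ (⊤ : ℕ∞) (Function.uncurry B0)) (t : ℝ) (x : V3) :
    deriv (fun s => en u B u0 B0 s x) t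
      = dot (u t x - u0 t x) ((fun i => deriv (fun s => u s x i) t) - fun i => deriv (fun s => u0 s x i) t)
      + dot (B t x - B0 t x) ((fun i => deriv (fun s => B s x i) t) - fun i => deriv (fun s => B0 s x i) t) := by
  have d : ∀ {w : ℝ → V3 → V3}, ContDiff ℝ (⊤ : ℕ∞) (Function.uncurry w) → ∀ i,
      HasDerivAt (fun s => w s x i) (deriv (fun s => w s x i) t) t := fun {w} hw i =>
    ((sl_t (w := fun t y => w t y i) (contDiff_pi.1 hw i) x).differentiable (by simp) t).hasDerivAt
  have dd := fun i => (d hu i).fun_sub (d hu0 i)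
  have db := fun i => (d hB i).fun_sub (d hB0 i)
  have := (((((dd 0).fun_mul (dd 0)).fun_add ((dd 1).fun_mul (dd 1))).fun_add ((dd 2).fun_mul (dd 2))).fun_add
    ((((db 0).fun_mul (db 0)).fun_add ((db 1).fun_mul (db 1))).fun_add ((db 2).fun_mul (db 2)))).div_const 2
  have e := this.deriv
  simp only [en, dot, Pi.sub_apply]
  rw [e]
  ring

/-- Uniqueness for the ideal MHD system: two smooth horizontally periodic solutions on
`[0,T]` with `u·n = 0` and `B × n = 0` on `∂Ω` which agree at `t = 0` on the slab
`{0 ≤ x₃ ≤ 1}` agree on `[0,T] × {0 ≤ x₃ ≤ 1}`. -/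
theorem stmt_17 (T : ℝ) (hT : 0 < T)
    (u B u0 B0 : ℝ → V3 → V3) (P P0 : ℝ → V3 → ℝ)
    (hu : ContDiff ℝ (⊤ : ℕ∞) (Function.uncurry u))
    (hB : ContDiff ℝ (⊤ : ℕ∞) (Function.uncurry B))
    (hP : ContDiff ℝ (⊤ : ℕ∞) (Function.uncurry P))
    (hu0 : ContDiff ℝ (⊤ : ℕ∞) (Function.uncurry u0))
    (hB0 : ContDiff ℝ (⊤ : ℕ∞) (Function.uncurry B0))
    (hP0 : ContDiff ℝ (⊤ : ℕ∞) (Function.uncurry P0))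
    (huper : ∀ t, hperV (u t)) (hBper : ∀ t, hperV (B t)) (hPper : ∀ t, hperS (P t))
    (hu0per : ∀ t, hperV (u0 t)) (hB0per : ∀ t, hperV (B0 t)) (hP0per : ∀ t, hperS (P0 t))
    (hmom : ∀ t ∈ Set.Icc (0:ℝ) T, ∀ x, ∀ i : Fin 3,
      deriv (fun s => u s x i) t + cross (vcurl (u t) x) (u t x) i
        + cross (B t x) (vcurl (B t) x) i + grad (P t) x i = 0)
    (hdivu : ∀ t ∈ Set.Icc (0:ℝ) T, ∀ x, vdiv (u t) x = 0)
    (hind : ∀ t ∈ Set.Icc (0:ℝ) T, ∀ x, ∀ i : Fin 3,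
      deriv (fun s => B s x i) t = vcurl (fun y => cross (u t y) (B t y)) x i)
    (hdivB : ∀ t ∈ Set.Icc (0:ℝ) T, ∀ x, vdiv (B t) x = 0)
    (hmom0 : ∀ t ∈ Set.Icc (0:ℝ) T, ∀ x, ∀ i : Fin 3,
      deriv (fun s => u0 s x i) t + cross (vcurl (u0 t) x) (u0 t x) i
        + cross (B0 t x) (vcurl (B0 t) x) i + grad (P0 t) x i = 0)
    (hdivu0 : ∀ t ∈ Set.Icc (0:ℝ) T, ∀ x, vdiv (u0 t) x = 0)
    (hind0 : ∀ t ∈ Set.Icc (0:ℝ) T, ∀ x, ∀ i : Fin 3,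
      deriv (fun s => B0 s x i) t = vcurl (fun y => cross (u0 t y) (B0 t y)) x i)
    (hdivB0 : ∀ t ∈ Set.Icc (0:ℝ) T, ∀ x, vdiv (B0 t) x = 0)
    (hubc : ∀ t ∈ Set.Icc (0:ℝ) T, ∀ x, onBdry x → u t x 2 = 0)
    (hu0bc : ∀ t ∈ Set.Icc (0:ℝ) T, ∀ x, onBdry x → u0 t x 2 = 0)
    (hBbc : ∀ t ∈ Set.Icc (0:ℝ) T, ∀ x, onBdry x → B t x 0 = 0 ∧ B t x 1 = 0)
    (hB0bc : ∀ t ∈ Set.Icc (0:ℝ) T, ∀ x, onBdry x → B0 t x 0 = 0 ∧ B0 t x 1 = 0)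
    (hinit : ∀ x : V3, 0 ≤ x 2 → x 2 ≤ 1 → u 0 x = u0 0 x ∧ B 0 x = B0 0 x) :
    ∀ t ∈ Set.Icc (0:ℝ) T, ∀ x : V3, 0 ≤ x 2 → x 2 ≤ 1 →
      u t x = u0 t x ∧ B t x = B0 t x := by
  set e := en u B u0 B0 with he
  have hes := en_smooth hu hB hu0 hB0
  obtain ⟨M1, hM1⟩ := pd_bd hu T
  obtain ⟨M2, hM2⟩ := pd_bd hu0 T
  obtain ⟨M3, hM3⟩ := pd_bd hB0 T
  set M := max M1 (max M2 (2 * M3)) with hM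
  have hQm : MeasurableSet Q3 := measurableSet_Icc
  have hQ : IsCompact Q3 := isCompact_Icc
  have hder : ∀ t, HasDerivAt (fun s => ∫ x in Q3, e s x) (∫ x in Q3, deriv (fun s => e s x) t) t :=
    fun t => int_deriv hes t
  have hec : ∀ t, Continuous (e t) := fun t => (sl_x hes t).continuous
  have hbound : ∀ t ∈ Set.Icc (0:ℝ) T,
      ‖∫ x in Q3, deriv (fun s => e s x) t‖ ≤ 48 * M * ‖∫ x in Q3, e t x‖ := by
    intro t ht
    have cu := sl_xV hu t
    have cB := sl_xV hB t
    have cu0 := sl_xV hu0 t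
    have cB0 := sl_xV hB0 t
    have cP : ContDiff ℝ 1 (P t) := (sl_x hP t).of_le (by simp)
    have cP0 : ContDiff ℝ 1 (P0 t) := (sl_x hP0 t).of_le (by simp)
    have hF := flux_smooth cu cB cu0 cB0 cP cP0
    set F := flux (u t) (B t) (u0 t) (B0 t) (P t) (P0 t) with hFd
    have hdiv : ∫ x in Q3, vdiv F x = 0 := slab_div F hF
      (flux_per (huper t) (hBper t) (hu0per t) (hB0per t) (hPper t) (hP0per t))
      (fun x hx => flux_bc (hubc t ht x hx) (hu0bc t ht x hx) (hBbc t ht x hx) (hB0bc t ht x hx))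
    have hdivc : Continuous (vdiv F) := by
      have h : ∀ i j, Continuous (fun x => pd i (fun y => F y j) x) := by
        intro i j
        have := (contDiff_pi.1 hF j).continuous_fderiv one_ne_zero
        unfold pd
        fun_prop
      exact ((h 0 0).add (h 1 1)).add (h 2 2)
    have hdc : Continuous (fun x => deriv (fun s => e s x) t) :=
      (td_joint hes).comp (by fun_prop : Continuous (fun x : V3 => (t, x)))
    have hsub : ∫ x in Q3, deriv (fun s => e s x) t
        = ∫ x in Q3, (deriv (fun s => e s x) t - vdiv F x) := by
      rw [integral_sub (hdc.continuousOn.integrableOn_compact hQ)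
        (hdivc.continuousOn.integrableOn_compact hQ), hdiv, sub_zero]
    have hpt : ∀ x ∈ Q3, ‖deriv (fun s => e s x) t - vdiv F x‖ ≤ 48 * M * e t x := by
      intro x hx
      have hid := ident (u t) (B t) (u0 t) (B0 t) (P t) (P0 t) x
        (cu.differentiable one_ne_zero) (cB.differentiable one_ne_zero) (cP.differentiable one_ne_zero)
        (cu0.differentiable one_ne_zero) (cB0.differentiable one_ne_zero) (cP0.differentiable one_ne_zero)
        _ _ _ _ (hmom t ht x) (hdivu t ht x) (hind t ht x) (hdivB t ht x)
        (hmom0 t ht x) (hdivu0 t ht x) (hind0 t ht x) (hdivB0 t ht x)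
      rw [he, en_deriv hu hB hu0 hB0 t x, hid, add_sub_cancel_left]
      refine rem_bound _ _ _ _ _ M (fun i j => (hM1 t ht x hx i j).trans (le_max_left _ _))
        (fun i j => (hM2 t ht x hx i j).trans ((le_max_left _ _).trans (le_max_right _ _))) ?_
      have hh : 2 * M3 ≤ M := (le_max_right _ _).trans (le_max_right _ _)
      have hb := fun i j => abs_le.1 (hM3 t ht x hx i j)
      intro i
      rw [abs_le]
      fin_cases i
      · simp only [vcurl]; simp
        constructor <;> linarith [(hb 1 2).1, (hb 1 2).2, (hb 2 1).1, (hb 2 1).2]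
      · simp only [vcurl]; simp
        constructor <;> linarith [(hb 2 0).1, (hb 2 0).2, (hb 0 2).1, (hb 0 2).2]
      · simp only [vcurl]; simp
        constructor <;> linarith [(hb 0 1).1, (hb 0 1).2, (hb 1 0).1, (hb 1 0).2]
    rw [hsub, Real.norm_of_nonneg (integral_nonneg fun x => en_nonneg u B u0 B0 t x), ← integral_const_mul]
    refine norm_integral_le_of_norm_le (((hec t).const_mul (48 * M)).continuousOn.integrableOn_compact hQ) ?_
    exact (ae_restrict_iff' hQm).2 (Filter.Eventually.of_forall hpt)
  have hE0 : ∫ x in Q3, e 0 x = 0 := by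
    have : ∫ x in Q3, e 0 x = ∫ x in Q3, (0:ℝ) := by
      refine setIntegral_congr_fun hQm fun x hx => ?_
      obtain ⟨h1, h2⟩ := hinit x (hx.1 2) (hx.2 2)
      simp [he, en, h1, h2, dot]
    rw [this]; simp
  have hE := eq_zero_of_abs_deriv_le_mul_abs_self_of_eq_zero_right
    (f := fun s => ∫ x in Q3, e s x) (f' := fun t => ∫ x in Q3, deriv (fun s => e s x) t) (a := 0) (b := T)
    (fun t _ => (hder t).continuousAt.continuousWithinAt) (fun t _ => (hder t).hasDerivWithinAt) hE0
    (fun t ht => hbound t ⟨ht.1, ht.2.le⟩)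
  intro t ht x hx0 hx1
  have hz := zero_of_int (hec t) (en_nonneg u B u0 B0 t) (hE t ht)
  have hz1 : ∀ x ∈ Q3, dot (u t x - u0 t x) (u t x - u0 t x) = 0 ∧
      dot (B t x - B0 t x) (B t x - B0 t x) = 0 := by
    intro x hx
    have h := hz x hx
    have h1 := dot_self_nonneg (u t x - u0 t x)
    have h2 := dot_self_nonneg (B t x - B0 t x)
    simp only [he, en] at h
    constructor <;> linarith
  exact ⟨per_ext (huper t) (hu0per t) (fun x hx => eq_of_dot (hz1 x hx).1) x hx0 hx1,
    per_ext (hBper t) (hB0per t) (fun x hx => eq_of_dot (hz1 x hx).2) x hx0 hx1⟩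
end
end
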